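/- Fix γ₋, γ₊, C₋, C₊ and λ > 0. For every ε > 0 set j₀(ε) = 2γ₊C₊/(ε·γ₋·C₋). Then for all integers i, j, and all k such that j ≥ j₀(ε) and 0 ≤ i < i + j ≤ q_k − 1, and for every x in the circle, the ordered eigenvalues of the periodic restriction H̃_{q_k}(x) satisfy μ̃_{i+j}(x) − μ̃_i(x) ≥ λ·γ₋·C₋·(1 − ε)·j/q_k. -/

import Mathlib

open MeasureTheory Polynomial Filter

noncomputable section

attribute [local instance] Matrix.normedAddCommGroup

/-- Dirichlet restriction `H_n(x)` of the Schrödinger operator with potential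
`n ↦ λ f (T^n x)` to `[0, n-1]`: tridiagonal with diagonal `λ f (T^j x)` and `1`
on the two off-diagonals. -/
def HDir (lam : ℝ) (f : ℝ → ℝ) (T : Equiv.Perm ℝ) (x : ℝ) (n : ℕ) :
    Matrix (Fin n) (Fin n) ℝ :=
  Matrix.of fun i j : Fin n =>
    (if i = j then lam * f ((T ^ (i : ℕ)) x) else 0) +
    (if (i : ℕ) + 1 = (j : ℕ) ∨ (j : ℕ) + 1 = (i : ℕ) then 1 else 0)

/-- Periodic restriction `H̃_n(x)`: the Dirichlet restriction with additional
entries `1` in the corners `(0, n-1)` and `(n-1, 0)`. -/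
def HPer (lam : ℝ) (f : ℝ → ℝ) (T : Equiv.Perm ℝ) (x : ℝ) (n : ℕ) :
    Matrix (Fin n) (Fin n) ℝ :=
  HDir lam f T x n +
    Matrix.of (fun i j : Fin n =>
      if ((i : ℕ) = 0 ∧ (j : ℕ) = n - 1) ∨ ((i : ℕ) = n - 1 ∧ (j : ℕ) = 0) then (1 : ℝ) else 0)

/-- `P_n(x,E) = det (H_n(x) - E)`. -/
def Pdet (lam : ℝ) (f : ℝ → ℝ) (T : Equiv.Perm ℝ) (x E : ℝ) (n : ℕ) : ℝ :=
  (HDir lam f T x n - E • (1 : Matrix (Fin n) (Fin n) ℝ)).det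

/-- `P_n(x,E)` with integer index, with the conventions `P_0 = 1` and `P_n = 0` for `n < 0`. -/
def PdetI (lam : ℝ) (f : ℝ → ℝ) (T : Equiv.Perm ℝ) (x E : ℝ) (n : ℤ) : ℝ :=
  if 0 ≤ n then Pdet lam f T x E n.toNat else 0

/-- `P̃_n(x,E) = det (H̃_n(x) - E)`. -/
def PtildeDet (lam : ℝ) (f : ℝ → ℝ) (T : Equiv.Perm ℝ) (x E : ℝ) (n : ℕ) : ℝ :=
  (HPer lam f T x n - E • (1 : Matrix (Fin n) (Fin n) ℝ)).det

/-- One-step transfer matrix `A_i(x,E)`. -/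
def transferA (lam : ℝ) (f : ℝ → ℝ) (T : Equiv.Perm ℝ) (E x : ℝ) (i : ℕ) :
    Matrix (Fin 2) (Fin 2) ℝ :=
  !![E - lam * f ((T ^ i) x), -1; 1, 0]

/-- `n`-step transfer matrix `M_n(x,E) = A_{n-1} ⋯ A_0`. -/
def transferM (lam : ℝ) (f : ℝ → ℝ) (T : Equiv.Perm ℝ) (E x : ℝ) :
    ℕ → Matrix (Fin 2) (Fin 2) ℝ
  | 0 => 1
  | m + 1 => transferA lam f T E x m * transferM lam f T E x m

/-- Dirichlet restriction `H_{[a, a+m-1]}(x)` of the operator to the integer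
interval starting at `a : ℤ` of length `m`. -/
def HBox (lam : ℝ) (f : ℝ → ℝ) (T : Equiv.Perm ℝ) (x : ℝ) (a : ℤ) (m : ℕ) :
    Matrix (Fin m) (Fin m) ℝ :=
  Matrix.of fun i j : Fin m =>
    (if i = j then lam * f ((T ^ (a + ((i : ℕ) : ℤ))) x) else 0) +
    (if (i : ℕ) + 1 = (j : ℕ) ∨ (j : ℕ) + 1 = (i : ℕ) then 1 else 0)

/-- Green function `G_{x,E,[a,a+m-1]} = (H_{[a,a+m-1]}(x) - E)⁻¹`. -/
def GBox (lam : ℝ) (f : ℝ → ℝ) (T : Equiv.Perm ℝ) (x E : ℝ) (a : ℤ) (m : ℕ) :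
    Matrix (Fin m) (Fin m) ℝ :=
  (HBox lam f T x a m - E • (1 : Matrix (Fin m) (Fin m) ℝ))⁻¹

/-- A point `n : ℤ` is `(x, c, qk)`-regular: there is an interval `[a, b]` of length
`qk` (`b = a + qk - 1`) containing `n` with `|n - a| ≥ qk/5`, `|n - b| ≥ qk/5` and
`|G(a,n)| ≤ e^{-c|n-a|}`, `|G(n,b)| ≤ e^{-c|n-b|}`. -/
def RegularPt (lam : ℝ) (f : ℝ → ℝ) (T : Equiv.Perm ℝ) (x E c : ℝ) (qk : ℕ) (n : ℤ) : Prop :=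
  ∃ (a : ℤ) (i0 i j : Fin qk),
    (i0 : ℕ) = 0 ∧ (j : ℕ) = qk - 1 ∧ n = a + ((i : ℕ) : ℤ) ∧
    (qk : ℝ) / 5 ≤ ((i : ℕ) : ℝ) ∧ (qk : ℝ) / 5 ≤ ((j : ℕ) : ℝ) - ((i : ℕ) : ℝ) ∧
    |GBox lam f T x E a qk i0 i| ≤ Real.exp (-c * ((i : ℕ) : ℝ)) ∧
    |GBox lam f T x E a qk i j| ≤ Real.exp (-c * (((j : ℕ) : ℝ) - ((i : ℕ) : ℝ)))

/-- The `ν`-measure of the positively oriented arc of the circle `ℝ/ℤ` from `u` to `v`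
(computed for a `1`-periodic measure `ν` on `ℝ`). -/
def arcMeasure (ν : Measure ℝ) (u v : ℝ) : ℝ :=
  (ν (Set.Icc u (u + Int.fract (v - u)))).toReal

/-- The `ν`-measure of the smaller of the two complementary arcs between `u` and `v`. -/
def arcDist (ν : Measure ℝ) (u v : ℝ) : ℝ :=
  min (arcMeasure ν u v) (arcMeasure ν v u)

/-- The measure of the gap of the orbit point `T^j x` in the partition of the circle
by `x, Tx, …, T^{qk-1}x`: the measure of the positively oriented arc from `T^j x` to the
closest (in the positive direction) other orbit point. -/
def gapMeas (ν : Measure ℝ) (T : Equiv.Perm ℝ) (x : ℝ) (qk : ℕ) (j : ℕ) : ℝ :=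
  sInf ((fun j' : ℕ => arcMeasure ν ((T ^ j) x) ((T ^ j') x)) '' {j' | j' < qk ∧ j' ≠ j})

/-- `β(α) = limsup_k (ln q_{k+1}) / q_k` computed from the sequence of
continued-fraction denominators. -/
def cfBeta (q : ℕ → ℕ) : ℝ :=
  Filter.limsup (fun k : ℕ => Real.log (q (k + 1) : ℝ) / (q k : ℝ)) Filter.atTop

/-!
Write `n = q_k`. In the coordinate `φ` given by the distribution function of `ν`, the map `T` is the
rotation by `α`, so the orbit of `x` becomes the sequence `fract (θ + l α)`. Since
`|α - p / n| ≤ 1 / n ^ 2` with `p` prime to `n`, the cyclic time shift `l ↦ l + m` modulo `n` with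
`p m ≡ j` moves every orbit point forward in `[0, 1)` by a `ν`-measure greater than `(j - 1) / n`,
except for exactly `j` points that wrap around.

A cyclic relabelling of the sites changes only the diagonal of the periodic matrix `H̃_n(x)`. Hence
the relabelled matrix has the same spectrum, while off the `j` exceptional sites its diagonal
exceeds the original one by at least `λ γ₋ C₋ (j - 1) / n`, by the lower Lipschitz bounds on `f` and
on the inverse of `φ`. A perturbation carried by `j` sites moves the ordering of the eigenvalues by
at most `j` places, so `μ̃_{i+j} - μ̃_i ≥ λ γ₋ C₋ (j - 1) / n`. Finally `j ≥ j₀(ε)` forces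
`ε j ≥ 2`, because `γ₋ ≤ γ₊` and `C₋ ≤ C₊`, and so `j - 1 ≥ (1 - ε) j`.
-/

/-! ### Convergents -/

section Convergents

variable {K : Type*} [Field K] [LinearOrder K] [FloorRing K]

theorem exists_int_contsAux_of_eq (v : K) (n : ℕ) :
    ∃ a b : ℤ, (GenContFract.of v).contsAux n = ⟨a, b⟩ := by
  induction n using Nat.twoStepInduction with
  | zero => exact ⟨1, 0, by simp [GenContFract.contsAux]⟩
  | one => exact ⟨⌊v⌋, 1, by simp [GenContFract.contsAux, GenContFract.of_h_eq_floor]⟩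
  | more n ih ih_succ =>
    obtain ⟨a, b, hab⟩ := ih
    obtain ⟨a', b', hab'⟩ := ih_succ
    rcases hs : (GenContFract.of v).s.get? n with _ | gp
    · exact ⟨a', b', hab' ▸ GenContFract.contsAux_stable_step_of_terminated hs⟩
    · obtain ⟨hnum, z, hden⟩ := GenContFract.of_partNum_eq_one_and_exists_int_partDen_eq hs
      refine ⟨z * a' + a, z * b' + b, ?_⟩
      rw [GenContFract.contsAux_recurrence hs hab hab', hnum, hden]
      push_cast
      simp only [one_mul]

theorem exists_int_nums_of_eq_and_dens_of_eq (v : K) (n : ℕ) :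
    ∃ a b : ℤ, (GenContFract.of v).nums n = a ∧ (GenContFract.of v).dens n = b := by
  obtain ⟨a, b, hab⟩ := exists_int_contsAux_of_eq v (n + 1)
  refine ⟨a, b, ?_, ?_⟩
  · rw [GenContFract.num_eq_conts_a, GenContFract.nth_cont_eq_succ_nth_contAux, hab]
  · rw [GenContFract.den_eq_conts_b, GenContFract.nth_cont_eq_succ_nth_contAux, hab]

theorem isCoprime_of_nums_of_dens_of {v : K} {n : ℕ} {p q : ℤ}
    (hn : ¬ (GenContFract.of v).TerminatedAt n)
    (hp : (GenContFract.of v).nums n = p) (hq : (GenContFract.of v).dens n = q) :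
    IsCoprime p q := by
  obtain ⟨p', q', hp', hq'⟩ := exists_int_nums_of_eq_and_dens_of_eq v (n + 1)
  have hdet : (GenContFract.of v).nums n * (GenContFract.of v).dens (n + 1) -
      (GenContFract.of v).dens n * (GenContFract.of v).nums (n + 1) = (-1) ^ (n + 1) :=
    SimpContFract.determinant (s := SimpContFract.of v) hn
  rw [hp, hq, hp', hq'] at hdet
  have hdet_int : p * q' - q * p' = (-1) ^ (n + 1) := by exact_mod_cast hdet
  have hsign : ((-1 : ℤ) ^ (n + 1)) * (-1) ^ (n + 1) = 1 := by
    rw [← mul_pow, neg_mul_neg, one_mul, one_pow]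
  exact ⟨(-1) ^ (n + 1) * q', -(-1) ^ (n + 1) * p',
    by linear_combination (-1) ^ (n + 1) * hdet_int + hsign⟩

variable [IsStrictOrderedRing K]

theorem abs_sub_convs_of_le_one_div_dens_sq {v : K} {n : ℕ}
    (hn : ¬ (GenContFract.of v).TerminatedAt n) :
    |v - (GenContFract.of v).convs n| ≤ 1 / (GenContFract.of v).dens n ^ 2 := by
  have hpos : 0 < (GenContFract.of v).dens n :=
    (Nat.cast_pos.2 (Nat.fib_pos.2 n.succ_pos)).trans_le <|
      GenContFract.succ_nth_fib_le_of_nth_den <|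
        n.eq_zero_or_pos.imp_right fun _ => mt (GenContFract.terminated_stable n.pred_le) hn
  calc |v - (GenContFract.of v).convs n|
      ≤ 1 / ((GenContFract.of v).dens n * (GenContFract.of v).dens (n + 1)) :=
        GenContFract.abs_sub_convs_le hn
    _ ≤ 1 / ((GenContFract.of v).dens n * (GenContFract.of v).dens n) := by
        gcongr
        exact GenContFract.of_den_mono
    _ = 1 / (GenContFract.of v).dens n ^ 2 := by rw [sq]

theorem exists_isCoprime_abs_sub_div_le_of_dens_of_eq {v : K} {n q : ℕ}
    (hn : ¬ (GenContFract.of v).TerminatedAt n) (hq : (q : K) = (GenContFract.of v).dens n) :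
    ∃ p : ℤ, IsCoprime p q ∧ |v - p / q| ≤ 1 / (q : K) ^ 2 := by
  obtain ⟨p, -, hp, -⟩ := exists_int_nums_of_eq_and_dens_of_eq v n
  refine ⟨p, isCoprime_of_nums_of_dens_of hn hp (by rw [← hq, Int.cast_natCast]), ?_⟩
  simpa only [GenContFract.conv_eq_num_div_den, hp, ← hq]
    using abs_sub_convs_of_le_one_div_dens_sq hn

end Convergents

theorem not_terminatedAt_of_irrational {α : ℝ} (hα : Irrational α) (n : ℕ) :
    ¬ (GenContFract.of α).TerminatedAt n := fun h =>
  let ⟨r, hr⟩ := (GenContFract.terminates_iff_rat α).1 ⟨n, h⟩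
  hα ⟨r, hr.symm⟩

/-! ### The distribution function of an invariant measure -/

section DistFun

/-- The distribution function of a measure on the line, normalised to vanish at the origin: the
measure of `(0, t]` for `0 ≤ t`, and minus the measure of `(t, 0]` for `t ≤ 0`. -/
def distFun (ν : Measure ℝ) (t : ℝ) : ℝ :=
  ∫ _ in (0 : ℝ)..t, (1 : ℝ) ∂ν

variable {ν : Measure ℝ}

theorem distFun_zero : distFun ν 0 = 0 :=
  intervalIntegral.integral_same

variable [IsLocallyFiniteMeasure ν]

theorem distFun_sub_of_le {u v : ℝ} (huv : u ≤ v) :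
    distFun ν v - distFun ν u = ν.real (Set.Ioc u v) := by
  rw [distFun, distFun, intervalIntegral.integral_interval_sub_left intervalIntegrable_const
    intervalIntegrable_const, intervalIntegral.integral_of_le huv, setIntegral_const,
    smul_eq_mul, mul_one]

theorem distFun_strictMono [ν.IsOpenPosMeasure] : StrictMono (distFun ν) := fun u v huv => by
  rw [← sub_pos, distFun_sub_of_le huv.le]
  exact ENNReal.toReal_pos
    (((Measure.measure_Ioo_pos ν).2 huv).trans_le (measure_mono Set.Ioo_subset_Ioc_self)).ne'
    measure_Ioc_lt_top.ne

theorem distFun_apply_of_map_eq {g : ℝ → ℝ} (hg : StrictMono g) (hmap : ν.map g = ν) (t : ℝ) :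
    distFun ν (g t) = distFun ν t + distFun ν (g 0) := by
  have hsub {u v : ℝ} (huv : u ≤ v) :
      distFun ν (g v) - distFun ν (g u) = distFun ν v - distFun ν u := by
    rw [distFun_sub_of_le huv, distFun_sub_of_le (hg.monotone huv), Measure.real, Measure.real]
    nth_rw 1 [← hmap]
    rw [Measure.map_apply hg.monotone.measurable measurableSet_Ioc]
    congr 2
    exact (OrderEmbedding.ofStrictMono g hg).preimage_Ioc u v
  have h0 : distFun ν 0 = 0 := distFun_zero
  rcases le_total 0 t with h | h <;> linarith [hsub h]

variable [ν.IsOpenPosMeasure]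

/-- The distribution function of a translation-invariant measure giving mass `1` to a fundamental
domain, as the lift of a circle map of degree one. -/
def distLift (hone : ν (Set.Ioc 0 1) = 1) (hper : ν.map (· + 1) = ν) : CircleDeg1Lift where
  toFun := distFun ν
  monotone' := distFun_strictMono.monotone
  map_add_one' t := by
    have h1 : distFun ν 1 = 1 := by
      simpa [distFun_zero, Measure.real, hone] using distFun_sub_of_le (ν := ν) zero_le_one
    simpa [h1] using distFun_apply_of_map_eq (add_left_strictMono (a := (1 : ℝ))) hper t

theorem distLift_pow_apply (hone : ν (Set.Ioc 0 1) = 1) (hper : ν.map (· + 1) = ν)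
    {g : CircleDeg1Lift} (hg : StrictMono g) (hmap : ν.map g = ν) (m : ℕ) (t : ℝ) :
    distLift hone hper ((g ^ m) t) = distLift hone hper t + m * g.translationNumber := by
  set φ := distLift hone hper
  have hφ (t : ℝ) : φ (g t) = φ (g 0) + φ t :=
    (distFun_apply_of_map_eq hg hmap t).trans (add_comm _ _)
  have hsemiconj : Function.Semiconj φ g (CircleDeg1Lift.translate (.ofAdd (φ (g 0)))) := hφ
  have hτ : g.translationNumber = φ (g 0) := by
    rw [CircleDeg1Lift.translationNumber_eq_of_semiconj hsemiconj,
      CircleDeg1Lift.translationNumber_translate]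
  rw [hτ, CircleDeg1Lift.coe_pow, hsemiconj.iterate_right m t,
    CircleDeg1Lift.translate_iterate, CircleDeg1Lift.translate_apply, add_comm]

end DistFun

theorem fract_map_of_strictMono {φ : CircleDeg1Lift} (hφ : StrictMono φ) (h0 : φ 0 = 0) (t : ℝ) :
    Int.fract (φ t) = φ (Int.fract t) := by
  have h1 : φ 1 = 1 := by simpa [h0] using φ.map_add_one 0
  refine Int.fract_eq_iff.2 ⟨?_, ?_, ⌊t⌋, ?_⟩
  · exact h0 ▸ φ.monotone (Int.fract_nonneg t)
  · exact h1 ▸ hφ (Int.fract_lt_one t)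
  · linarith [φ.map_fract_sub_fract_eq t, Int.fract_add_floor t]

/-- Length and `ν`-measure of arcs of the circle are comparable up to the constants `Cm` and `Cp`.
Arcs are intervals of length at most `1` on the line; the second inequality also excludes arcs of
infinite measure, whose `toReal` is `0`. -/
def IsArcComparable (ν : Measure ℝ) (Cm Cp : ℝ) : Prop :=
  ∀ u v : ℝ, u ≤ v → v ≤ u + 1 →
    Cm * (ν (Set.Icc u v)).toReal ≤ v - u ∧ v - u ≤ Cp * (ν (Set.Icc u v)).toReal

namespace IsArcComparable

variable {ν : Measure ℝ} {Cm Cp : ℝ}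

theorem toReal_measure_Icc_ne_zero (hν : IsArcComparable ν Cm Cp) {u v : ℝ} (huv : u < v)
    (hv : v ≤ u + 1) : (ν (Set.Icc u v)).toReal ≠ 0 := fun h => by
  have := (hν u v huv.le hv).2
  rw [h, mul_zero] at this
  linarith

theorem isLocallyFiniteMeasure (hν : IsArcComparable ν Cm Cp) : IsLocallyFiniteMeasure ν where
  finiteAtNhds t := by
    refine ⟨Set.Icc (t - 1 / 2) (t + 1 / 2), Icc_mem_nhds (by linarith) (by linarith), ?_⟩
    have := hν.toReal_measure_Icc_ne_zero (show t - 1 / 2 < t + 1 / 2 by linarith) (by linarith)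
    exact (ENNReal.toReal_ne_zero.1 this).2.lt_top

theorem isOpenPosMeasure (hν : IsArcComparable ν Cm Cp) : ν.IsOpenPosMeasure where
  open_pos U hU := by
    rintro ⟨t, ht⟩ hzero
    obtain ⟨δ, hδ, hball⟩ := Metric.nhds_basis_closedBall.mem_iff.1 (hU.mem_nhds ht)
    have hsub : Set.Icc t (t + min δ 1) ⊆ U := fun y hy => hball <| by
      rw [Metric.mem_closedBall, Real.dist_eq, abs_of_nonneg (by linarith [hy.1])]
      linarith [hy.2, min_le_left δ 1]
    have hpos : 0 < min δ 1 := lt_min hδ one_pos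
    refine hν.toReal_measure_Icc_ne_zero (lt_add_of_pos_right t hpos)
      (by linarith [min_le_right δ 1]) ?_
    rw [measure_mono_null hsub hzero, ENNReal.toReal_zero]

theorem nullSingletonClass (hν : IsArcComparable ν Cm Cp) (hCm : 0 < Cm) :
    NullSingletonClass ν where
  measure_singleton t := by
    have := hν.isLocallyFiniteMeasure
    have h := (hν t t le_rfl (by linarith)).1
    rw [Set.Icc_self, sub_self] at h
    have hzero : (ν {t}).toReal = 0 :=
      le_antisymm (nonpos_of_mul_nonpos_right h hCm) ENNReal.toReal_nonneg
    exact ((ENNReal.toReal_eq_zero_iff _).1 hzero).resolve_right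
      isCompact_singleton.measure_lt_top.ne

theorem const_le_const (hν : IsArcComparable ν Cm Cp) : Cm ≤ Cp := by
  have hpos : 0 < (ν (Set.Icc 0 1)).toReal := ENNReal.toReal_nonneg.lt_of_ne'
    (hν.toReal_measure_Icc_ne_zero one_pos (zero_add _).ge)
  obtain ⟨hlower, hupper⟩ := hν 0 1 zero_le_one (zero_add _).ge
  exact le_of_mul_le_mul_right (hlower.trans hupper) hpos

theorem mul_distFun_sub_le [IsLocallyFiniteMeasure ν] (hν : IsArcComparable ν Cm Cp)
    (hCm : 0 ≤ Cm) {u v : ℝ} (huv : u ≤ v) (hv : v ≤ u + 1) :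
    Cm * (distFun ν v - distFun ν u) ≤ v - u := by
  rw [distFun_sub_of_le huv]
  refine le_trans ?_ (hν u v huv hv).1
  gcongr
  exact ENNReal.toReal_mono measure_Icc_lt_top.ne (measure_mono Set.Ioc_subset_Icc_self)

end IsArcComparable

theorem IsArcComparable.exists_strictMono_lift {ν : Measure ℝ} {Cm Cp : ℝ}
    (hν : IsArcComparable ν Cm Cp) (hCm : 0 < Cm) (hone : ν (Set.Ico 0 1) = 1)
    (hper : ν.map (· + 1) = ν) {g : CircleDeg1Lift} (hg : StrictMono g) (hmap : ν.map g = ν) :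
    ∃ φ : CircleDeg1Lift, StrictMono φ ∧ φ 0 = 0 ∧
      (∀ (m : ℕ) (t : ℝ), φ ((g ^ m) t) = φ t + m * g.translationNumber) ∧
      ∀ u v, u ≤ v → v ≤ u + 1 → Cm * (φ v - φ u) ≤ v - u := by
  have := hν.isLocallyFiniteMeasure
  have := hν.isOpenPosMeasure
  have := hν.nullSingletonClass hCm
  have hone' : ν (Set.Ioc 0 1) = 1 := by rw [← measure_congr Ico_ae_eq_Ioc, hone]
  exact ⟨distLift hone' hper, distFun_strictMono, distFun_zero,
    distLift_pow_apply hone' hper hg hmap, fun _ _ => hν.mul_distFun_sub_le hCm.le⟩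

theorem IsArcComparable.exists_strictMono_lift_of_perm {ν : Measure ℝ} {Cm Cp α : ℝ}
    (hν : IsArcComparable ν Cm Cp) (hCm : 0 < Cm) (hone : ν (Set.Ico 0 1) = 1)
    (hper : ν.map (· + 1) = ν) {T : Equiv.Perm ℝ} (hT : StrictMono T)
    (hTper : ∀ t, T (t + 1) = T t + 1) (hmap : ν.map T = ν)
    (hrot : Tendsto (fun m : ℕ => (T ^ m) 0 / (m : ℝ)) atTop (nhds α)) :
    ∃ φ : CircleDeg1Lift, StrictMono φ ∧ φ 0 = 0 ∧
      (∀ (m : ℕ) (t : ℝ), φ ((T ^ m) t) = φ t + m * α) ∧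
      ∀ u v, u ≤ v → v ≤ u + 1 → Cm * (φ v - φ u) ≤ v - u := by
  let g : CircleDeg1Lift := ⟨⟨T, hT.monotone⟩, hTper⟩
  have hpow (m : ℕ) (t : ℝ) : (g ^ m) t = (T ^ m) t := by
    rw [CircleDeg1Lift.coe_pow, ← Equiv.Perm.iterate_eq_pow]
    rfl
  have hτ : g.translationNumber = α := g.translationNumber_eq_of_tendsto₀ <| by
    simpa only [← CircleDeg1Lift.coe_pow, hpow] using hrot
  obtain ⟨φ, hφ, h0, hφg, hφC⟩ := hν.exists_strictMono_lift hCm hone hper (g := g) hT hmap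
  exact ⟨φ, hφ, h0, fun m t => by rw [← hpow, hφg, hτ], hφC⟩

/-! ### Cyclic shifts of an almost rational orbit -/

section CyclicShift

theorem exists_fin_mul_modEq {n : ℕ} [NeZero n] {p : ℤ} (hp : IsCoprime p n) (j : ℤ) :
    ∃ m : Fin n, p * (m : ℕ) ≡ j [ZMOD n] := by
  obtain ⟨u, v, huv⟩ := hp
  have hnonneg := Int.emod_nonneg (j * u) (Int.natCast_ne_zero.2 (NeZero.ne n))
  have hlt := Int.emod_lt_of_pos (j * u) (Int.natCast_pos.2 (NeZero.pos n))
  refine ⟨⟨(j * u % n).toNat, by omega⟩, ?_⟩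
  calc p * ((j * u % n).toNat : ℤ) = p * (j * u % n) := by rw [Int.toNat_of_nonneg hnonneg]
    _ ≡ p * (j * u) [ZMOD n] := (Int.mod_modEq _ _).mul_left p
    _ ≡ j [ZMOD n] := Int.modEq_iff_dvd.2 ⟨j * v, by linear_combination (-j) * huv⟩

theorem val_add_sub_val_modEq {n : ℕ} (l m : Fin n) :
    (((l + m : Fin n) : ℕ) : ℤ) - (l : ℕ) ≡ (m : ℕ) [ZMOD n] := by
  rw [Fin.val_add, Int.natCast_mod, Nat.cast_add]
  simpa using (Int.mod_modEq ((l : ℕ) + (m : ℕ) : ℤ) n).sub_right ((l : ℕ) : ℤ)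

theorem exists_int_fract_sub_fract_eq {n : ℕ} [NeZero n] {p a b j : ℤ}
    (h : p * (b - a) ≡ j [ZMOD n]) (α θ : ℝ) :
    ∃ w : ℤ, Int.fract (θ + b * α) - Int.fract (θ + a * α) =
      j / n + (b - a) * (α - p / n) + w := by
  obtain ⟨r, hr⟩ := h.symm.dvd
  have hr' : (p : ℝ) * (b - a) - j = n * r := by exact_mod_cast hr
  have hn : (n : ℝ) ≠ 0 := NeZero.ne _
  have hdiv : (b - a) * (p / n : ℝ) = j / n + r := by
    field_simp
    linear_combination hr'
  refine ⟨r - ⌊θ + b * α⌋ + ⌊θ + a * α⌋, ?_⟩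
  rw [Int.fract, Int.fract]
  push_cast
  linear_combination hdiv

theorem sum_comp_perm_sub_eq_zero {ι : Type*} [Fintype ι] (σ : Equiv.Perm ι) (s : ι → ℝ) :
    ∑ l, (s (σ l) - s l) = 0 := by
  rw [Finset.sum_sub_distrib, Equiv.sum_comp σ s, sub_self]

theorem eq_zero_or_eq_neg_one_of_sub_eq {s t c δ : ℝ} {w : ℤ} {η : ℝ} (hs : s ∈ Set.Ico (0 : ℝ) 1)
    (ht : t ∈ Set.Ico (0 : ℝ) 1) (hst : t - s = c + δ + w) (hδ : |δ| < η) (hηc : η ≤ c)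
    (hcη : c + η ≤ 1) : w = 0 ∨ w = -1 := by
  obtain ⟨hδ_lower, hδ_upper⟩ := abs_lt.1 hδ
  have hw_lt : (w : ℝ) < 1 := by linarith [hs.1, ht.2]
  have hw_gt : (-2 : ℝ) < w := by linarith [hs.2, ht.1]
  have hw_lt' : w < 1 := by exact_mod_cast hw_lt
  have hw_gt' : -2 < w := by exact_mod_cast hw_gt
  omega

/-- The increments of `s` along the permutation `σ` cancel, so exactly `j` of the integers `w l`
are `-1`. -/
theorem exists_card_eq_forall_notMem_lt_sub {ι : Type*} [Fintype ι] {s δ : ι → ℝ} {w : ι → ℤ}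
    {σ : Equiv.Perm ι} {j : ℕ} (hj : 0 < j) (hjn : j < Fintype.card ι)
    (hs : ∀ l, s l ∈ Set.Ico (0 : ℝ) 1)
    (hinc : ∀ l, s (σ l) - s l = j / Fintype.card ι + δ l + w l)
    (hδ : ∀ l, |δ l| < 1 / Fintype.card ι) (hδ_sum : ∑ l, δ l = 0) :
    ∃ S : Finset ι, S.card = j ∧ ∀ l ∉ S, ((j : ℝ) - 1) / Fintype.card ι < s (σ l) - s l := by
  have hn : (0 : ℝ) < Fintype.card ι := by exact_mod_cast hj.trans hjn
  have hj_lower : (1 : ℝ) / Fintype.card ι ≤ j / Fintype.card ι := by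
    gcongr
    exact_mod_cast hj
  have hj_upper : (j : ℝ) / Fintype.card ι + 1 / Fintype.card ι ≤ 1 := by
    rw [← add_div, div_le_one hn]
    exact_mod_cast hjn
  have hw (l : ι) : w l = 0 ∨ w l = -1 :=
    eq_zero_or_eq_neg_one_of_sub_eq (hs l) (hs (σ l)) (hinc l) (hδ l) hj_lower hj_upper
  have hw_sum : (j : ℤ) + ∑ l, w l = 0 := by
    have h := sum_comp_perm_sub_eq_zero σ s
    simp only [hinc, Finset.sum_add_distrib, hδ_sum, Finset.sum_const, Finset.card_univ,
      nsmul_eq_mul, mul_div_cancel₀ _ hn.ne', add_zero] at h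
    exact_mod_cast h
  refine ⟨Finset.univ.filter fun l => w l = -1, ?_, fun l hl => ?_⟩
  · have hw_ite (l : ι) : w l = -(if w l = -1 then 1 else 0) := by
      rcases hw l with h | h <;> simp [h]
    rw [Finset.sum_congr rfl fun l _ => hw_ite l, Finset.sum_neg_distrib,
      Finset.sum_boole] at hw_sum
    omega
  · have hl0 : w l = 0 := (hw l).resolve_right fun h => hl (by simpa using h)
    rw [hinc, hl0, sub_div, Int.cast_zero]
    linarith [(abs_lt.1 (hδ l)).1]

theorem abs_val_sub_val_mul_lt {n : ℕ} {η : ℝ} (hη : |η| ≤ 1 / (n : ℝ) ^ 2) (a b : Fin n) :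
    |((a : ℕ) - (b : ℕ) : ℝ) * η| < 1 / n := by
  have hn : (0 : ℝ) < n := by exact_mod_cast a.pos
  have hab : |((a : ℕ) - (b : ℕ) : ℝ)| < n := by
    have ha : ((a : ℕ) : ℝ) < n := by exact_mod_cast a.isLt
    have hb : ((b : ℕ) : ℝ) < n := by exact_mod_cast b.isLt
    exact abs_sub_lt_of_nonneg_of_lt (Nat.cast_nonneg _) ha (Nat.cast_nonneg _) hb
  calc |((a : ℕ) - (b : ℕ) : ℝ) * η| ≤ |((a : ℕ) - (b : ℕ) : ℝ)| * (1 / (n : ℝ) ^ 2) := by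
        rw [abs_mul]
        gcongr
    _ < n * (1 / (n : ℝ) ^ 2) := by gcongr
    _ = 1 / n := by field_simp

theorem exists_shift_forall_notMem_lt_fract_sub_fract {n : ℕ} {p : ℤ} {α : ℝ}
    (hp : IsCoprime p n) (hα : |α - p / n| ≤ 1 / (n : ℝ) ^ 2) (θ : ℝ) {j : ℕ} (hj : 0 < j)
    (hjn : j < n) :
    ∃ (m : Fin n) (S : Finset (Fin n)), S.card = j ∧ ∀ l ∉ S, ((j : ℝ) - 1) / n <
      Int.fract (θ + ((l + m : Fin n) : ℕ) * α) - Int.fract (θ + (l : ℕ) * α) := by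
  have : NeZero n := ⟨by omega⟩
  obtain ⟨m, hm⟩ := exists_fin_mul_modEq hp j
  have hmod (l : Fin n) : p * (((l + m : Fin n) : ℕ) - (l : ℕ)) ≡ j [ZMOD n] :=
    ((val_add_sub_val_modEq l m).mul_left p).trans hm
  choose w hw using fun l => exists_int_fract_sub_fract_eq (hmod l) α θ
  have hdrift : ∑ l : Fin n, (((l + m : Fin n) : ℕ) - (l : ℕ) : ℝ) * (α - p / n) = 0 := by
    rw [← Finset.sum_mul]
    exact mul_eq_zero_of_left
      (sum_comp_perm_sub_eq_zero (Equiv.addRight m) fun l => ((l : ℕ) : ℝ)) _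
  have h := exists_card_eq_forall_notMem_lt_sub (σ := Equiv.addRight m)
    (s := fun l : Fin n => Int.fract (θ + (l : ℕ) * α))
    (δ := fun l => (((l + m : Fin n) : ℕ) - (l : ℕ) : ℝ) * (α - p / n)) (w := w) hj
    (by rwa [Fintype.card_fin]) (fun _ => ⟨Int.fract_nonneg _, Int.fract_lt_one _⟩)
    (by simpa using hw) (by simpa using fun l => abs_val_sub_val_mul_lt hα (l + m) l) hdrift
  rw [Fintype.card_fin] at h
  exact ⟨m, h⟩

end CyclicShift

/-! ### A Weyl inequality -/

section Weyl

open scoped InnerProductSpace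

section InnerProductSpace

variable {𝕜 E ι : Type*} [RCLike 𝕜] [NormedAddCommGroup E] [InnerProductSpace 𝕜 E] [Fintype ι]

section Eigenbasis

variable {A : E →ₗ[𝕜] E} {b : OrthonormalBasis ι 𝕜 E} {μ : ι → ℝ}

theorem re_inner_map_eq_sum (hA : ∀ i, A (b i) = (μ i : 𝕜) • b i) (v : E) :
    RCLike.re ⟪v, A v⟫_𝕜 = ∑ i, μ i * ‖⟪b i, v⟫_𝕜‖ ^ 2 := by
  have hv : A v = ∑ i, ⟪b i, v⟫_𝕜 • (μ i : 𝕜) • b i := by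
    conv_lhs => rw [← b.sum_repr' v, map_sum]
    simp only [map_smul, hA]
  have hterm (i : ι) : ⟪v, ⟪b i, v⟫_𝕜 • (μ i : 𝕜) • b i⟫_𝕜 =
      ((μ i * ‖⟪b i, v⟫_𝕜‖ ^ 2 : ℝ) : 𝕜) := by
    rw [inner_smul_right, inner_smul_right, mul_left_comm, ← inner_conj_symm v (b i),
      RCLike.mul_conj]
    push_cast
    rfl
  rw [hv, inner_sum, map_sum]
  exact Finset.sum_congr rfl fun i _ => by rw [hterm, RCLike.ofReal_re]

theorem mul_norm_sq_le_re_inner_map (hA : ∀ i, A (b i) = (μ i : 𝕜) • b i) {c : ℝ} {v : E}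
    (hv : ∀ i, ⟪b i, v⟫_𝕜 ≠ 0 → c ≤ μ i) : c * ‖v‖ ^ 2 ≤ RCLike.re ⟪v, A v⟫_𝕜 := by
  rw [re_inner_map_eq_sum hA, ← b.sum_sq_norm_inner_right v, Finset.mul_sum]
  refine Finset.sum_le_sum fun i _ => ?_
  by_cases hi : ⟪b i, v⟫_𝕜 = 0
  · simp [hi]
  · exact mul_le_mul_of_nonneg_right (hv i hi) (sq_nonneg _)

theorem re_inner_map_le_mul_norm_sq (hA : ∀ i, A (b i) = (μ i : 𝕜) • b i) {c : ℝ} {v : E}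
    (hv : ∀ i, ⟪b i, v⟫_𝕜 ≠ 0 → μ i ≤ c) : RCLike.re ⟪v, A v⟫_𝕜 ≤ c * ‖v‖ ^ 2 := by
  have hneg (i : ι) : (-A) (b i) = ((-μ i : ℝ) : 𝕜) • b i := by
    rw [LinearMap.neg_apply, hA, RCLike.ofReal_neg, neg_smul]
  have h := mul_norm_sq_le_re_inner_map hneg fun i hi => neg_le_neg (hv i hi)
  rwa [LinearMap.neg_apply, inner_neg_right, map_neg, neg_mul, neg_le_neg_iff] at h

end Eigenbasis

theorem exists_mem_ne_zero_forall_inner_eq_zero (W : Submodule 𝕜 E) [FiniteDimensional 𝕜 W]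
    {u : ι → E} (hcard : Fintype.card ι < Module.finrank 𝕜 W) :
    ∃ v ∈ W, v ≠ 0 ∧ ∀ i, ⟪u i, v⟫_𝕜 = 0 := by
  let F : W →ₗ[𝕜] ι → 𝕜 := LinearMap.pi fun i => (innerₛₗ 𝕜 (u i)).comp W.subtype
  have hker : F.ker ≠ ⊥ := LinearMap.ker_ne_bot_of_finrank_lt <| by
    rwa [Module.finrank_fintype_fun_eq_card]
  obtain ⟨v, hv, hv0⟩ := (Submodule.ne_bot_iff _).1 hker
  exact ⟨v, v.2, by simpa using hv0, fun i => congrFun (LinearMap.mem_ker.1 hv) i⟩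

theorem add_le_of_re_inner_map_add_le {n : ℕ} {A B : E →ₗ[𝕜] E}
    {u w : OrthonormalBasis (Fin n) 𝕜 E} {α β : Fin n → ℝ}
    (hA : ∀ i, A (u i) = (α i : 𝕜) • u i) (hα : Monotone α)
    (hB : ∀ i, B (w i) = (β i : 𝕜) • w i) (hβ : Monotone β) {W : Submodule 𝕜 E} {c : ℝ}
    (hAB : ∀ v ∈ W, RCLike.re ⟪v, A v⟫_𝕜 + c * ‖v‖ ^ 2 ≤ RCLike.re ⟪v, B v⟫_𝕜) {a b : Fin n}
    (hab : n + a ≤ Module.finrank 𝕜 W + b) : α a + c ≤ β b := by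
  have : FiniteDimensional 𝕜 E := u.toBasis.finiteDimensional_of_finite
  obtain ⟨v, hvW, hv0, hv⟩ := exists_mem_ne_zero_forall_inner_eq_zero W
    (u := Sum.elim (fun l : Finset.Iio a => u l) (fun l : Finset.Ioi b => w l)) (by
      rw [Fintype.card_sum, Fintype.card_coe, Fintype.card_coe, Fin.card_Iio, Fin.card_Ioi]
      omega)
  have hvA : α a * ‖v‖ ^ 2 ≤ RCLike.re ⟪v, A v⟫_𝕜 := mul_norm_sq_le_re_inner_map hA fun l hl =>
    hα <| le_of_not_gt fun hla => hl (hv (.inl ⟨l, Finset.mem_Iio.2 hla⟩))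
  have hvB : RCLike.re ⟪v, B v⟫_𝕜 ≤ β b * ‖v‖ ^ 2 := re_inner_map_le_mul_norm_sq hB fun l hl =>
    hβ <| le_of_not_gt fun hbl => hl (hv (.inr ⟨l, Finset.mem_Ioi.2 hbl⟩))
  have hpos : 0 < ‖v‖ ^ 2 := by positivity
  refine le_of_mul_le_mul_right ?_ hpos
  linarith [hAB v hvW]

end InnerProductSpace

variable {𝕜 ι : Type*} [RCLike 𝕜]

/-- The subspace of vectors whose coordinates in `S` are all zero: two matrices that differ only in
the diagonal entries indexed by `S` have the same quadratic form on it. -/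
def vanishingOn (𝕜 : Type*) [RCLike 𝕜] (S : Finset ι) : Submodule 𝕜 (EuclideanSpace 𝕜 ι) :=
  (LinearMap.pi fun s : S => EuclideanSpace.projₗ (s : ι)).ker

theorem apply_eq_zero_of_mem_vanishingOn {S : Finset ι} {v : EuclideanSpace 𝕜 ι}
    (hv : v ∈ vanishingOn 𝕜 S) {s : ι} (hs : s ∈ S) : v s = 0 :=
  congrFun (LinearMap.mem_ker.1 hv) ⟨s, hs⟩

variable [Fintype ι]

theorem card_le_finrank_vanishingOn_add_card (S : Finset ι) :
    Fintype.card ι ≤ Module.finrank 𝕜 (vanishingOn 𝕜 S) + S.card := by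
  let proj : EuclideanSpace 𝕜 ι →ₗ[𝕜] S → 𝕜 :=
    LinearMap.pi fun s : S => EuclideanSpace.projₗ (s : ι)
  have hrange : Module.finrank 𝕜 proj.range ≤ S.card := by
    simpa using proj.range.finrank_le
  have hdim : Module.finrank 𝕜 proj.range + Module.finrank 𝕜 (vanishingOn 𝕜 S) =
      Fintype.card ι := by
    rw [← finrank_euclideanSpace (𝕜 := 𝕜) (ι := ι)]
    exact proj.finrank_range_add_finrank_ker
  omega

theorem mul_norm_sq_le_re_inner_diagonal [DecidableEq ι] {d : ι → ℝ} {S : Finset ι} {c : ℝ}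
    (hd : ∀ l ∉ S, c ≤ d l) {v : EuclideanSpace 𝕜 ι} (hv : v ∈ vanishingOn 𝕜 S) :
    c * ‖v‖ ^ 2 ≤
      RCLike.re ⟪v, Matrix.toEuclideanLin (Matrix.diagonal fun l => (d l : 𝕜)) v⟫_𝕜 := by
  refine mul_norm_sq_le_re_inner_map (b := EuclideanSpace.basisFun ι 𝕜) (μ := d)
    (fun l => ?_) fun l hl => hd l fun hlS => hl ?_
  · ext l'
    by_cases h : l' = l <;> simp [Matrix.toLpLin_apply, RCLike.real_smul_eq_coe_mul, h]
  · rw [EuclideanSpace.basisFun_inner, apply_eq_zero_of_mem_vanishingOn hv hlS]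

theorem exists_perm_comp_eq_of_prod_X_sub_C_eq {R : Type*} [CommRing R] [IsDomain R] {a b : ι → R}
    (h : ∏ i, (X - C (a i)) = ∏ i, (X - C (b i))) : ∃ σ : Equiv.Perm ι, a ∘ σ = b := by
  classical
  have hroots (a : ι → R) : (∏ i, (X - C (a i))).roots = Finset.univ.val.map a := by
    rw [← roots_multiset_prod_X_sub_C (Finset.univ.val.map a), Multiset.map_map]
    rfl
  have hcard (r : R) : Fintype.card {i // b i = r} = Fintype.card {i // a i = r} := by
    have hcount := congrArg (Multiset.count r ∘ roots) h
    simp only [Function.comp_apply, hroots, Multiset.count_map] at hcount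
    rw [Fintype.card_subtype, Fintype.card_subtype]
    simpa only [eq_comm, Finset.card_def, Finset.filter_val] using hcount.symm
  have e (r : R) : {i // b i = r} ≃ {i // a i = r} := Fintype.equivOfCardEq (hcard r)
  exact ⟨Equiv.ofFiberEquiv e, funext (Equiv.ofFiberEquiv_map e)⟩

theorem exists_orthonormalBasis_forall_toEuclideanLin_eq_smul [DecidableEq ι] {A : Matrix ι ι 𝕜}
    (hA : A.IsHermitian) {μ : ι → ℝ} (hchar : A.charpoly = ∏ i, (X - C (μ i : 𝕜))) :
    ∃ b : OrthonormalBasis ι 𝕜 (EuclideanSpace 𝕜 ι),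
      ∀ i, Matrix.toEuclideanLin A (b i) = (μ i : 𝕜) • b i := by
  obtain ⟨σ, hσ⟩ := exists_perm_comp_eq_of_prod_X_sub_C_eq (hA.charpoly_eq.symm.trans hchar)
  refine ⟨hA.eigenvectorBasis.reindex σ.symm, fun i => ?_⟩
  rw [← congrFun hσ i]
  ext l
  simpa [Matrix.toLpLin_apply, RCLike.real_smul_eq_coe_mul] using
    congrFun (hA.mulVec_eigenvectorBasis (σ i)) l

theorem add_le_of_charpoly_add_diagonal_eq {n : ℕ} {A : Matrix (Fin n) (Fin n) 𝕜}
    (hA : A.IsHermitian) {d α β : Fin n → ℝ} (hα : Monotone α) (hβ : Monotone β)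
    (hcharA : A.charpoly = ∏ i, (X - C (α i : 𝕜)))
    (hcharB : (A + Matrix.diagonal fun l => (d l : 𝕜)).charpoly = ∏ i, (X - C (β i : 𝕜)))
    {S : Finset (Fin n)} {c : ℝ} (hd : ∀ l ∉ S, c ≤ d l) {a b : Fin n}
    (hab : (a : ℕ) + S.card ≤ b) : α a + c ≤ β b := by
  have hB : (A + Matrix.diagonal fun l => (d l : 𝕜)).IsHermitian :=
    hA.add (Matrix.isHermitian_diagonal_iff.2 fun l => RCLike.conj_ofReal (d l))
  obtain ⟨u, hu⟩ := exists_orthonormalBasis_forall_toEuclideanLin_eq_smul hA hcharA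
  obtain ⟨w, hw⟩ := exists_orthonormalBasis_forall_toEuclideanLin_eq_smul hB hcharB
  refine add_le_of_re_inner_map_add_le hu hα hw hβ (W := vanishingOn 𝕜 S) (fun v hv => ?_) ?_
  · rw [map_add, LinearMap.add_apply, inner_add_right, map_add]
    gcongr
    exact mul_norm_sq_le_re_inner_diagonal hd hv
  · have := card_le_finrank_vanishingOn_add_card (𝕜 := 𝕜) S
    rw [Fintype.card_fin] at this
    omega

end Weyl

/-! ### The periodic matrix under cyclic relabelling -/

section PeriodicMatrix

variable {n : ℕ} (lam : ℝ) (f : ℝ → ℝ) (T : Equiv.Perm ℝ) (x : ℝ)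

theorem HPer_isHermitian : (HPer lam f T x n).IsHermitian := by
  ext a b
  have hdiag : (if b = a then lam * f ((T ^ (b : ℕ)) x) else 0) =
      if a = b then lam * f ((T ^ (a : ℕ)) x) else 0 := by
    by_cases h : a = b
    · rw [h]
    · rw [if_neg h, if_neg (Ne.symm h)]
  simp only [Matrix.conjTranspose_apply, star_trivial, HPer, HDir, Matrix.add_apply,
    Matrix.of_apply, hdiag, or_comm, and_comm]

theorem add_one_eq_iff_val [NeZero n] (hn : 2 ≤ n) (a b : Fin n) :
    a + 1 = b ↔ (a : ℕ) + 1 = b ∨ ((a : ℕ) = n - 1 ∧ (b : ℕ) = 0) := by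
  have hone : ((1 : Fin n) : ℕ) = 1 := by rw [Fin.val_one', Nat.mod_eq_of_lt hn]
  have ha := a.isLt
  have hb := b.isLt
  rw [Fin.ext_iff, Fin.val_add, hone]
  rcases Nat.lt_or_ge ((a : ℕ) + 1) n with h | h
  · rw [Nat.mod_eq_of_lt h]
    omega
  · rw [show (a : ℕ) + 1 = n by omega, Nat.mod_self]
    omega

/-- For `n = 2` both hops join the same pair of sites, whence the entry `2` off the diagonal. -/
theorem HPer_apply [NeZero n] (hn : 2 ≤ n) (a b : Fin n) :
    HPer lam f T x n a b = (if a = b then lam * f ((T ^ (a : ℕ)) x) else 0) +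
      ((if a + 1 = b then 1 else 0) + (if b + 1 = a then 1 else 0)) := by
  have ha := a.isLt
  have hb := b.isLt
  simp only [HPer, HDir, Matrix.add_apply, Matrix.of_apply, add_one_eq_iff_val hn, add_assoc]
  congr 1
  split_ifs <;> first | omega | norm_num

theorem reindex_HPer_eq_add_diagonal [NeZero n] (hn : 2 ≤ n) (m : Fin n) :
    Matrix.reindex (Equiv.addRight m).symm (Equiv.addRight m).symm (HPer lam f T x n) =
      HPer lam f T x n + Matrix.diagonal fun l : Fin n =>
        lam * (f ((T ^ ((l + m : Fin n) : ℕ)) x) - f ((T ^ (l : ℕ)) x)) := by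
  ext a b
  simp only [Matrix.reindex_apply, Matrix.submatrix_apply, Equiv.symm_symm, Equiv.coe_addRight,
    Matrix.add_apply, HPer_apply lam f T x hn, Matrix.diagonal_apply, add_right_comm _ m 1,
    add_left_inj]
  split_ifs <;> ring

variable {lam f T x}

theorem add_mul_le_of_charpoly_HPer_eq (hn : 2 ≤ n) (hlam : 0 ≤ lam) {μ : Fin n → ℝ}
    (hμ : Monotone μ) (hchar : (HPer lam f T x n).charpoly = ∏ i, (X - C (μ i))) {m : Fin n}
    {S : Finset (Fin n)} {c : ℝ}
    (hc : ∀ l ∉ S, c ≤ f ((T ^ ((l + m : Fin n) : ℕ)) x) - f ((T ^ (l : ℕ)) x)) {a b : Fin n}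
    (hab : (a : ℕ) + S.card ≤ b) : μ a + lam * c ≤ μ b := by
  have : NeZero n := ⟨by omega⟩
  have hshift := Matrix.charpoly_reindex (Equiv.addRight m).symm (HPer lam f T x n)
  rw [reindex_HPer_eq_add_diagonal lam f T x hn m, hchar] at hshift
  exact add_le_of_charpoly_add_diagonal_eq (HPer_isHermitian lam f T x) hμ hμ hchar hshift
    (fun l hl => mul_le_mul_of_nonneg_left (hc l hl) hlam) hab

end PeriodicMatrix

/-! ### Separation of eigenvalues -/

theorem mul_fract_sub_fract_le_of_periodic {f : ℝ → ℝ} {γ : ℝ} (hfper : Function.Periodic f 1)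
    (hf : ∀ u v, 0 ≤ u → u < v → v < 1 → γ * (v - u) ≤ f v - f u) {y y' : ℝ}
    (hy : Int.fract y < Int.fract y') : γ * (Int.fract y' - Int.fract y) ≤ f y' - f y := by
  have hfract (t : ℝ) : f (Int.fract t) = f t := by
    simpa using hfper.sub_int_mul_eq (x := t) ⌊t⌋
  rw [← hfract y, ← hfract y']
  exact hf _ _ (Int.fract_nonneg y) hy (Int.fract_lt_one y')

theorem mul_fract_map_sub_fract_map_le {φ : CircleDeg1Lift} {K : ℝ} (hφ : StrictMono φ)
    (h0 : φ 0 = 0) (hK : ∀ u v, u ≤ v → v ≤ u + 1 → K * (φ v - φ u) ≤ v - u) {y y' : ℝ}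
    (hy : Int.fract y ≤ Int.fract y') :
    K * (Int.fract (φ y') - Int.fract (φ y)) ≤ Int.fract y' - Int.fract y := by
  rw [fract_map_of_strictMono hφ h0, fract_map_of_strictMono hφ h0]
  exact hK _ _ hy (by linarith [Int.fract_nonneg y, Int.fract_lt_one y'])

theorem exists_shift_forall_notMem_le_sub {f : ℝ → ℝ} {T : Equiv.Perm ℝ} {φ : CircleDeg1Lift}
    {γ K α : ℝ} (hγ : 0 ≤ γ) (hK : 0 ≤ K) (hfper : Function.Periodic f 1)
    (hf : ∀ u v, 0 ≤ u → u < v → v < 1 → γ * (v - u) ≤ f v - f u) (hφ : StrictMono φ)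
    (h0 : φ 0 = 0) (hφT : ∀ (m : ℕ) (t : ℝ), φ ((T ^ m) t) = φ t + m * α)
    (hφK : ∀ u v, u ≤ v → v ≤ u + 1 → K * (φ v - φ u) ≤ v - u) {n : ℕ} {p : ℤ}
    (hp : IsCoprime p n) (happ : |α - p / n| ≤ 1 / (n : ℝ) ^ 2) (x : ℝ) {j : ℕ} (hj : 0 < j)
    (hjn : j < n) :
    ∃ (m : Fin n) (S : Finset (Fin n)), S.card = j ∧ ∀ l ∉ S, γ * (K * (((j : ℝ) - 1) / n)) ≤
      f ((T ^ ((l + m : Fin n) : ℕ)) x) - f ((T ^ (l : ℕ)) x) := by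
  obtain ⟨m, S, hS, hshift⟩ :=
    exists_shift_forall_notMem_lt_fract_sub_fract hp happ (φ x) hj hjn
  refine ⟨m, S, hS, fun l hl => ?_⟩
  set y := (T ^ (l : ℕ)) x with hy
  set y' := (T ^ ((l + m : Fin n) : ℕ)) x with hy'
  have hgap : ((j : ℝ) - 1) / n < Int.fract (φ y') - Int.fract (φ y) := by
    simpa only [hy, hy', hφT] using hshift l hl
  have hgap_nonneg : (0 : ℝ) ≤ ((j : ℝ) - 1) / n :=
    div_nonneg (sub_nonneg.2 (by exact_mod_cast hj)) n.cast_nonneg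
  have hlt : Int.fract y < Int.fract y' := by
    rw [← hφ.lt_iff_lt, ← fract_map_of_strictMono hφ h0, ← fract_map_of_strictMono hφ h0]
    linarith
  calc γ * (K * (((j : ℝ) - 1) / n)) ≤ γ * (K * (Int.fract (φ y') - Int.fract (φ y))) := by
        gcongr
    _ ≤ γ * (Int.fract y' - Int.fract y) := by
        gcongr
        exact mul_fract_map_sub_fract_map_le hφ h0 hφK hlt.le
    _ ≤ f y' - f y := mul_fract_sub_fract_le_of_periodic hfper hf hlt

theorem two_le_mul_of_div_le {a b c d ε j : ℝ} (ha : 0 < a) (hc : 0 < c) (hε : 0 < ε)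
    (hab : a ≤ b) (hcd : c ≤ d) (hj : 2 * b * d / (ε * a * c) ≤ j) : 2 ≤ ε * j := by
  have hac : 0 < a * c := mul_pos ha hc
  have hb : 0 ≤ b := ha.le.trans hab
  rw [div_le_iff₀ (by positivity)] at hj
  refine le_of_mul_le_mul_right ?_ hac
  calc 2 * (a * c) ≤ 2 * (b * d) := by gcongr
    _ ≤ ε * j * (a * c) := by linarith

theorem eigenvalue_vertical_separation_general {f : ℝ → ℝ} {T : Equiv.Perm ℝ} {ν : Measure ℝ}
    {γm γp Cm Cp lam α : ℝ} {n : ℕ} {p : ℤ} {x : ℝ} {μ : Fin n → ℝ} (hγm : 0 < γm)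
    (hlam : 0 ≤ lam) (hfper : Function.Periodic f 1)
    (hfLip : ∀ u v : ℝ, 0 ≤ u → u < v → v < 1 →
      γm * (v - u) ≤ f v - f u ∧ f v - f u ≤ γp * (v - u))
    (hTmono : StrictMono T) (hTper : ∀ t : ℝ, T (t + 1) = T t + 1)
    (hrot : Tendsto (fun m : ℕ => (T ^ m) 0 / (m : ℝ)) atTop (nhds α)) (hCm : 0 < Cm)
    (hνprob : ν (Set.Ico 0 1) = 1) (hνinv : ν.map T = ν) (hνper : ν.map (· + 1) = ν)
    (hcomp : IsArcComparable ν Cm Cp) (hp : IsCoprime p n)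
    (happ : |α - p / n| ≤ 1 / (n : ℝ) ^ 2) (hμmono : Monotone μ)
    (hμeig : (HPer lam f T x n).charpoly = ∏ i, (X - C (μ i))) {ε : ℝ} (hε : 0 < ε) {i j : ℕ}
    (hj0 : 2 * γp * Cp / (ε * γm * Cm) ≤ j) (hij : i + j < n) :
    lam * γm * Cm * (1 - ε) * j / n ≤ μ ⟨i + j, hij⟩ - μ ⟨i, by omega⟩ := by
  have hγ : γm ≤ γp := by
    have h := hfLip 0 (1 / 2) le_rfl (by norm_num) (by norm_num)
    linarith [h.1, h.2]
  have hεj : 2 ≤ ε * j := two_le_mul_of_div_le hγm hCm hε hγ hcomp.const_le_const hj0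
  have hj : 0 < j := by
    rw [pos_iff_ne_zero]
    rintro rfl
    norm_num at hεj
  obtain ⟨φ, hφ, h0, hφT, hφC⟩ :=
    hcomp.exists_strictMono_lift_of_perm hCm hνprob hνper hTmono hTper hνinv hrot
  obtain ⟨m, S, hS, hshift⟩ := exists_shift_forall_notMem_le_sub hγm.le hCm.le hfper
    (fun u v hu huv hv => (hfLip u v hu huv hv).1) hφ h0 hφT hφC hp happ x hj (by omega)
  have hgap : μ ⟨i, by omega⟩ + lam * (γm * (Cm * ((j - 1) / n))) ≤ μ ⟨i + j, hij⟩ :=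
    add_mul_le_of_charpoly_HPer_eq (by omega) hlam hμmono hμeig hshift
      (by rw [hS])
  calc lam * γm * Cm * (1 - ε) * j / n = lam * (γm * (Cm * ((j - ε * j) / n))) := by ring
    _ ≤ lam * (γm * (Cm * ((j - 1) / n))) := by gcongr; linarith
    _ ≤ μ ⟨i + j, hij⟩ - μ ⟨i, by omega⟩ := by linarith

/-- Vertical comparison: if `j ≥ j₀(ε) = 2γ₊C₊/(εγ₋C₋)` and
`0 ≤ i < i + j ≤ q_k − 1`, then `μ̃_{i+j}(x) − μ̃_i(x) ≥ λγ₋C₋(1 − ε) j / q_k`. -/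
theorem eigenvalue_vertical_separation
    (f : ℝ → ℝ) (T : Equiv.Perm ℝ) (ν : Measure ℝ)
    (γm γp Cm Cp lam α : ℝ) (q : ℕ → ℕ) (k : ℕ) (μ : ℝ → Fin (q k) → ℝ)
    (hγm : 0 < γm) (hγp : 0 < γp) (hlam : 0 < lam)
    (hfper : ∀ t : ℝ, f (t + 1) = f t) (hf0 : f 0 = 0)
    (hf1 : Filter.Tendsto f (nhdsWithin 1 (Set.Iio 1)) (nhds 1))
    (hfLip : ∀ u v : ℝ, 0 ≤ u → u < v → v < 1 →
      γm * (v - u) ≤ f v - f u ∧ f v - f u ≤ γp * (v - u))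
    (hTmono : StrictMono ⇑T) (hTper : ∀ t : ℝ, T (t + 1) = T t + 1)
    (hαirr : Irrational α)
    (hrot : Filter.Tendsto (fun m : ℕ => (T ^ m) 0 / (m : ℝ)) Filter.atTop (nhds α))
    (hCm : 0 < Cm) (hCp : 0 < Cp)
    (hνprob : ν (Set.Ico (0 : ℝ) 1) = 1)
    (hνinv : MeasureTheory.Measure.map (⇑T) ν = ν)
    (hνper : MeasureTheory.Measure.map (fun t : ℝ => t + 1) ν = ν)
    (hcomp : ∀ u v : ℝ, u ≤ v → v ≤ u + 1 →
      Cm * (ν (Set.Icc u v)).toReal ≤ v - u ∧ v - u ≤ Cp * (ν (Set.Icc u v)).toReal)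
    (hqpos : ∀ m : ℕ, 0 < q m)
    (hqcf : ∀ m : ℕ, ((q m : ℕ) : ℝ) = (GenContFract.of α).dens m)
    (hμmono : ∀ z : ℝ, Monotone (μ z))
    (hμeig : ∀ z : ℝ, (HPer lam f T z (q k)).charpoly = ∏ i, (X - Polynomial.C (μ z i)))
    (ε : ℝ) (hε : 0 < ε)
    (i j : ℕ) (hj0 : 2 * γp * Cp / (ε * γm * Cm) ≤ (j : ℝ)) (hjpos : 0 < j)
    (hij : i + j ≤ q k - 1) (hlt : i + j < q k)
    (x : ℝ) :
    lam * γm * Cm * (1 - ε) * (j : ℝ) / (q k : ℝ) ≤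
      μ x ⟨i + j, hlt⟩ - μ x ⟨i, by omega⟩ := by
  obtain ⟨p, hp, happ⟩ :=
    exists_isCoprime_abs_sub_div_le_of_dens_of_eq (not_terminatedAt_of_irrational hαirr k) (hqcf k)
  exact eigenvalue_vertical_separation_general hγm hlam.le hfper hfLip hTmono hTper hrot hCm hνprob
    hνinv hνper hcomp hp happ (hμmono x) (hμeig x) hε hj0 hlt
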